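/- Let f : ℝ^d → ℝ be a convex function and S an invertible d × d real matrix. Let Q(x) and Q^S(x) be the matrices of Radon–Nikodym derivatives of the absolutely continuous parts of the second derivative measures of f and of x ↦ f(Sx), respectively. Then for Lebesgue-almost every x ∈ ℝ^d: Q^S(x) = Sᵀ Q(Sx) S. -/

import Mathlib

open MeasureTheory Filter Metric
open scoped Topology ENNReal NNReal

/-- The second partial derivative `∂_i ∂_j φ` at `x`. -/
noncomputable def secondPartial (d : ℕ) (φ : EuclideanSpace ℝ (Fin d) → ℝ)
    (i j : Fin d) (x : EuclideanSpace ℝ (Fin d)) : ℝ :=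
  fderiv ℝ (fun z => fderiv ℝ φ z (EuclideanSpace.single j 1)) x (EuclideanSpace.single i 1)

/-- `μp, μn` represent the (signed) second derivative measures `μ_{ij} = μp i j - μn i j`
of the function `g`. -/
def IsSecondDerivMeasures (d : ℕ) (g : EuclideanSpace ℝ (Fin d) → ℝ)
    (μp μn : Fin d → Fin d → Measure (EuclideanSpace ℝ (Fin d))) : Prop :=
  (∀ i j, IsLocallyFiniteMeasure (μp i j)) ∧ (∀ i j, IsLocallyFiniteMeasure (μn i j)) ∧
  ∀ i j, ∀ φ : EuclideanSpace ℝ (Fin d) → ℝ, ContDiff ℝ (⊤ : ℕ∞) φ → HasCompactSupport φ →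
    (∫ x, φ x ∂(μp i j)) - (∫ x, φ x ∂(μn i j)) = ∫ x, g x * secondPartial d φ i j x

/-- The matrix of Radon–Nikodym derivatives of the absolutely continuous parts of the
second derivative measures. -/
noncomputable def densityMatrix (d : ℕ)
    (μp μn : Fin d → Fin d → Measure (EuclideanSpace ℝ (Fin d)))
    (x : EuclideanSpace ℝ (Fin d)) : Matrix (Fin d) (Fin d) ℝ :=
  Matrix.of fun i j =>
    ((μp i j).rnDeriv volume x).toReal - ((μn i j).rnDeriv volume x).toReal

section RadonNikodym

variable {E : Type*} [NormedAddCommGroup E] [NormedSpace ℝ E] [FiniteDimensional ℝ E]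
  [MeasurableSpace E] [BorelSpace E] {ι : Type*} [Fintype ι]

theorem isLocallyFiniteMeasure_sum {X : Type*} [TopologicalSpace X] [MeasurableSpace X]
    (m : ι → Measure X) [∀ a, IsLocallyFiniteMeasure (m a)] :
    IsLocallyFiniteMeasure (∑ a, m a) := by
  refine ⟨fun x => ?_⟩
  choose s hs hms using fun a => (m a).finiteAt_nhds x
  refine ⟨⋂ a, s a, Filter.iInter_mem.2 hs, ?_⟩
  rw [Measure.finsetSum_apply]
  exact ENNReal.sum_lt_top.2 fun a _ =>
    (measure_mono (Set.iInter_subset s a)).trans_lt (hms a)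

theorem isLocallyFiniteMeasure_map_homeomorph {X Y : Type*} [TopologicalSpace X]
    [TopologicalSpace Y] [MeasurableSpace X] [MeasurableSpace Y] [BorelSpace X] [BorelSpace Y]
    (e : X ≃ₜ Y) (m : Measure X) [IsLocallyFiniteMeasure m] :
    IsLocallyFiniteMeasure (m.map e) := by
  refine ⟨fun y => ?_⟩
  obtain ⟨s, hs, hms⟩ := m.finiteAt_nhds (e.symm y)
  refine ⟨e.symm ⁻¹' s, e.symm.continuous.continuousAt hs, ?_⟩
  rw [e.measurableEmbedding.map_apply]
  simpa [← Set.preimage_comp] using hms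

/-- A linear relation between measures, tested against smooth compactly supported functions,
passes to their densities with respect to a dominating measure. -/
theorem ae_sum_mul_rnDeriv_eq_zero_of_le (κ : Measure E) [IsLocallyFiniteMeasure κ]
    (m : ι → Measure E) (hm : ∀ a, m a ≤ κ) (c : ι → ℝ)
    (h : ∀ φ : E → ℝ, ContDiff ℝ (⊤ : ℕ∞) φ → HasCompactSupport φ →
      ∑ a, c a * ∫ x, φ x ∂(m a) = 0) :
    ∀ᵐ x ∂κ, ∑ a, c a * ((m a).rnDeriv κ x).toReal = 0 := by
  have hmf : ∀ a, IsLocallyFiniteMeasure (m a) := fun a => Measure.isLocallyFiniteMeasure_of_le (hm a)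
  have hloc : ∀ a, LocallyIntegrable (fun x => ((m a).rnDeriv κ x).toReal) κ := fun a => by
    refine (locallyIntegrable_const (1 : ℝ)).mono
      (Measure.measurable_rnDeriv _ _).ennreal_toReal.aestronglyMeasurable ?_
    filter_upwards [Measure.rnDeriv_le_one_of_le (hm a)] with x hx
    simpa using ENNReal.toReal_mono ENNReal.one_ne_top hx
  have hloc' : ∀ a, LocallyIntegrable (fun x => c a * ((m a).rnDeriv κ x).toReal) κ :=
    fun a => (hloc a).smul (c a)
  refine ae_eq_zero_of_integral_contDiff_smul_eq_zero ?_ fun φ hφ hφc => ?_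
  · have := locallyIntegrable_finsetSum Finset.univ fun a _ => hloc' a
    simpa only [Finset.sum_apply] using this
  · rw [← h φ hφ hφc]
    simp_rw [Finset.smul_sum]
    rw [integral_finsetSum _ fun a _ =>
      (hloc' a).integrable_smul_left_of_hasCompactSupport hφ.continuous hφc]
    refine Finset.sum_congr rfl fun a _ => ?_
    rw [← integral_rnDeriv_smul (Measure.absolutelyContinuous_of_le (hm a)),
      ← integral_const_mul]
    refine integral_congr_ae (ae_of_all _ fun x => ?_)
    simp only [smul_eq_mul]
    ring

/-- A linear relation between measures, tested against smooth compactly supported functions,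
passes to the densities of their absolutely continuous parts. -/
theorem ae_sum_mul_rnDeriv_eq_zero (ν : Measure E) [IsLocallyFiniteMeasure ν]
    (m : ι → Measure E) [∀ a, IsLocallyFiniteMeasure (m a)] (c : ι → ℝ)
    (h : ∀ φ : E → ℝ, ContDiff ℝ (⊤ : ℕ∞) φ → HasCompactSupport φ →
      ∑ a, c a * ∫ x, φ x ∂(m a) = 0) :
    ∀ᵐ x ∂ν, ∑ a, c a * ((m a).rnDeriv ν x).toReal = 0 := by
  let M : Option ι → Measure E := fun o => o.elim ν m
  have hM : ∀ o, IsLocallyFiniteMeasure (M o) := by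
    rintro (_ | a)
    · assumption
    · exact inferInstanceAs (IsLocallyFiniteMeasure (m a))
  have hκ : IsLocallyFiniteMeasure (∑ o, M o) := isLocallyFiniteMeasure_sum M
  have hle : ∀ o, M o ≤ ∑ o, M o := fun o =>
    Finset.single_le_sum (fun _ _ => Measure.zero_le _) (Finset.mem_univ o)
  generalize ∑ o, M o = κ at hκ hle
  have hmκ : ∀ a, m a ≤ κ := fun a => hle (some a)
  have hνκ : ν ≪ κ := Measure.absolutelyContinuous_of_le (hle none)
  have hchain : ∀ᵐ x ∂ν, ∀ a, ((m a).rnDeriv κ * κ.rnDeriv ν) x = (m a).rnDeriv ν x :=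
    ae_all_iff.2 fun a =>
      Measure.rnDeriv_mul_rnDeriv (Measure.absolutelyContinuous_of_le (hmκ a))
  filter_upwards [hνκ.ae_le (ae_sum_mul_rnDeriv_eq_zero_of_le κ m hmκ c h), hchain] with x hx hxc
  simp_rw [← hxc, Pi.mul_apply, ENNReal.toReal_mul, ← mul_assoc]
  rw [← Finset.sum_mul, hx, zero_mul]

/-- Version of `ae_sum_mul_rnDeriv_eq_zero` for differences of measures. -/
theorem ae_sum_mul_rnDeriv_sub_eq_zero (ν : Measure E) [IsLocallyFiniteMeasure ν]
    (p n : ι → Measure E) [∀ a, IsLocallyFiniteMeasure (p a)]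
    [∀ a, IsLocallyFiniteMeasure (n a)] (c : ι → ℝ)
    (h : ∀ φ : E → ℝ, ContDiff ℝ (⊤ : ℕ∞) φ → HasCompactSupport φ →
      ∑ a, c a * (∫ x, φ x ∂(p a) - ∫ x, φ x ∂(n a)) = 0) :
    ∀ᵐ x ∂ν, ∑ a, c a * (((p a).rnDeriv ν x).toReal - ((n a).rnDeriv ν x).toReal) = 0 := by
  have hm : ∀ a, IsLocallyFiniteMeasure (Sum.elim p n a) := by
    rintro (a | a)
    · exact inferInstanceAs (IsLocallyFiniteMeasure (p a))
    · exact inferInstanceAs (IsLocallyFiniteMeasure (n a))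
  have key := ae_sum_mul_rnDeriv_eq_zero ν (Sum.elim p n) (Sum.elim c fun a => -c a)
    fun φ hφ hφc => by
      rw [← h φ hφ hφc]
      simp [Fintype.sum_sum_type, mul_sub, Finset.sum_sub_distrib, ← sub_eq_add_neg]
  filter_upwards [key] with x hx
  rw [← hx]
  simp [Fintype.sum_sum_type, mul_sub, Finset.sum_sub_distrib, ← sub_eq_add_neg]

end RadonNikodym

section SecondPartial

variable {d : ℕ}

theorem contDiff_fderiv_apply_const {E : Type*} [NormedAddCommGroup E] [NormedSpace ℝ E]
    {φ : E → ℝ} (hφ : ContDiff ℝ (⊤ : ℕ∞) φ) (v : E) :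
    ContDiff ℝ (⊤ : ℕ∞) fun z => fderiv ℝ φ z v :=
  (hφ.fderiv_right (by norm_cast)).clm_apply contDiff_const

theorem continuous_secondPartial {φ : EuclideanSpace ℝ (Fin d) → ℝ}
    (hφ : ContDiff ℝ (⊤ : ℕ∞) φ) (i j : Fin d) : Continuous (secondPartial d φ i j) :=
  (contDiff_fderiv_apply_const (contDiff_fderiv_apply_const hφ _) _).continuous

theorem hasCompactSupport_secondPartial {φ : EuclideanSpace ℝ (Fin d) → ℝ}
    (hφ : HasCompactSupport φ) (i j : Fin d) : HasCompactSupport (secondPartial d φ i j) :=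
  (hφ.fderiv_apply ℝ _).fderiv_apply ℝ _

theorem toEuclideanCLM_single (S : Matrix (Fin d) (Fin d) ℝ) (i : Fin d) :
    Matrix.toEuclideanCLM (𝕜 := ℝ) S (EuclideanSpace.single i 1) =
      ∑ k, S k i • EuclideanSpace.single k (1 : ℝ) := by
  ext k
  simp [Matrix.ofLp_toEuclideanCLM, Pi.single_apply]

theorem secondPartial_comp_toEuclideanCLM {φ : EuclideanSpace ℝ (Fin d) → ℝ}
    (hφ : ContDiff ℝ (⊤ : ℕ∞) φ) (S : Matrix (Fin d) (Fin d) ℝ) (i j : Fin d)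
    (x : EuclideanSpace ℝ (Fin d)) :
    secondPartial d (φ ∘ Matrix.toEuclideanCLM (𝕜 := ℝ) S) i j x =
      ∑ q : Fin d × Fin d, S q.1 i * S q.2 j *
        secondPartial d φ q.1 q.2 (Matrix.toEuclideanCLM (𝕜 := ℝ) S x) := by
  set L := Matrix.toEuclideanCLM (𝕜 := ℝ) S
  have chain : ∀ {ψ : EuclideanSpace ℝ (Fin d) → ℝ}, ContDiff ℝ (⊤ : ℕ∞) ψ →
      ∀ (l : Fin d) (z : EuclideanSpace ℝ (Fin d)),
      fderiv ℝ (fun y => ψ (L y)) z (EuclideanSpace.single l 1) =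
        ∑ k, S k l * fderiv ℝ ψ (L z) (EuclideanSpace.single k 1) := by
    intro ψ hψ l z
    have hd : HasFDerivAt (fun y => ψ (L y)) ((fderiv ℝ ψ (L z)).comp L) z :=
      ((hψ.differentiable (by simp)) (L z)).hasFDerivAt.comp z L.hasFDerivAt
    rw [hd.fderiv, ContinuousLinearMap.comp_apply, toEuclideanCLM_single, map_sum]
    simp
  have hdiff : ∀ l, ContDiff ℝ (⊤ : ℕ∞) fun z => fderiv ℝ φ z (EuclideanSpace.single l 1) :=
    fun l => contDiff_fderiv_apply_const hφ _
  have hfirst : (fun z => fderiv ℝ (φ ∘ L) z (EuclideanSpace.single j 1)) =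
      fun z => ∑ l, S l j * fderiv ℝ φ (L z) (EuclideanSpace.single l 1) :=
    funext fun z => chain hφ j z
  unfold secondPartial
  rw [hfirst, chain (ψ := fun y => ∑ l, S l j * fderiv ℝ φ y (EuclideanSpace.single l 1))
    (ContDiff.sum fun l _ => contDiff_const.mul (hdiff l)), Fintype.sum_prod_type]
  refine Finset.sum_congr rfl fun k _ => ?_
  have hs : HasFDerivAt (fun y => ∑ l, S l j * fderiv ℝ φ y (EuclideanSpace.single l 1))
      (∑ l, S l j • fderiv ℝ (fun z => fderiv ℝ φ z (EuclideanSpace.single l 1)) (L x)) (L x) :=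
    HasFDerivAt.fun_sum fun l _ =>
      (((hdiff l).differentiable (by simp)) (L x)).hasFDerivAt.const_mul (S l j)
  rw [hs.fderiv]
  simp [Finset.mul_sum, mul_assoc]

end SecondPartial

theorem det_toEuclideanCLM {d : ℕ} (S : Matrix (Fin d) (Fin d) ℝ) :
    (Matrix.toEuclideanCLM (𝕜 := ℝ) S).det = S.det :=
  LinearMap.det_toLin (PiLp.basisFun 2 ℝ (Fin d)) S

theorem density_matrix_change_of_variables (d : ℕ)
    (f : EuclideanSpace ℝ (Fin d) → ℝ) (hf : ConvexOn ℝ Set.univ f)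
    (S : Matrix (Fin d) (Fin d) ℝ) (hS : IsUnit S.det)
    (μp μn μSp μSn : Fin d → Fin d → Measure (EuclideanSpace ℝ (Fin d)))
    (hμ : IsSecondDerivMeasures d f μp μn)
    (hμS : IsSecondDerivMeasures d
      (fun x => f (WithLp.toLp 2 (S.mulVec x) : EuclideanSpace ℝ (Fin d))) μSp μSn) :
    ∀ᵐ x ∂(volume : Measure (EuclideanSpace ℝ (Fin d))),
      densityMatrix d μSp μSn x =
        S.transpose *
          densityMatrix d μp μn (WithLp.toLp 2 (S.mulVec x) : EuclideanSpace ℝ (Fin d)) * S := by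
  obtain ⟨hp, hn, hint⟩ := hμ
  obtain ⟨hSp, hSn, hintS⟩ := hμS
  have hcont : Continuous f := continuousOn_univ.1 (hf.continuousOn isOpen_univ)
  set L := Matrix.toEuclideanCLM (𝕜 := ℝ) S
  have hdet : L.det ≠ 0 := (det_toEuclideanCLM S).trans_ne hS.ne_zero
  let e : EuclideanSpace ℝ (Fin d) ≃ₜ EuclideanSpace ℝ (Fin d) :=
    (L.toContinuousLinearEquivOfDetNeZero hdet).toHomeomorph
  have he : MeasurableEmbedding L := e.measurableEmbedding
  set r : ℝ≥0 := Real.toNNReal |L.det⁻¹|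
  have hr : r ≠ 0 := (Real.toNNReal_pos.2 (abs_pos.2 (inv_ne_zero hdet))).ne'
  have hvol : (volume : Measure (EuclideanSpace ℝ (Fin d))).map L = r • volume :=
    Measure.map_linearMap_addHaar_eq_smul_addHaar volume hdet
  have hmap : ∀ m : Measure (EuclideanSpace ℝ (Fin d)), IsLocallyFiniteMeasure m →
      IsLocallyFiniteMeasure (m.map L) := fun m _ => isLocallyFiniteMeasure_map_homeomorph e m
  have hrel : ∀ i j, ∀ φ : EuclideanSpace ℝ (Fin d) → ℝ, ContDiff ℝ (⊤ : ℕ∞) φ →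
      HasCompactSupport φ →
      ∫ x, φ x ∂((μSp i j).map L) - ∫ x, φ x ∂((μSn i j).map L) =
        ∑ q : Fin d × Fin d, r * (S q.1 i * S q.2 j) *
          (∫ x, φ x ∂(μp q.1 q.2) - ∫ x, φ x ∂(μn q.1 q.2)) := by
    intro i j φ hφ hφc
    have hint' : ∀ q : Fin d × Fin d,
        Integrable (fun y => S q.1 i * S q.2 j * (f y * secondPartial d φ q.1 q.2 y))
          ((volume : Measure (EuclideanSpace ℝ (Fin d))).map L) := fun q => by
      rw [hvol]
      exact ((hcont.mul (continuous_secondPartial hφ _ _)).integrable_of_hasCompactSupport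
        (hasCompactSupport_secondPartial hφc _ _).mul_left).const_mul _
    rw [he.integral_map, he.integral_map]
    calc _ = ∫ x, f (L x) * secondPartial d (φ ∘ L) i j x :=
          hintS i j (φ ∘ L) (hφ.comp L.contDiff) (hφc.comp_homeomorph e)
      _ = ∫ x, ∑ q : Fin d × Fin d,
            S q.1 i * S q.2 j * (f (L x) * secondPartial d φ q.1 q.2 (L x)) := by
          refine integral_congr_ae (ae_of_all _ fun x => ?_)
          simp only [L, secondPartial_comp_toEuclideanCLM hφ, Finset.mul_sum]
          exact Finset.sum_congr rfl fun q _ => by ring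
      _ = ∫ y, ∑ q : Fin d × Fin d,
            S q.1 i * S q.2 j * (f y * secondPartial d φ q.1 q.2 y) ∂(volume.map L) := by
          rw [he.integral_map]
      _ = _ := by
          rw [integral_finsetSum _ fun q _ => hint' q]
          refine Finset.sum_congr rfl fun q _ => ?_
          rw [integral_const_mul, hvol, integral_smul_nnreal_measure, ← hint q.1 q.2 φ hφ hφc,
            NNReal.smul_def, smul_eq_mul]
          ring
  have hentry : ∀ i j, ∀ᵐ x ∂(volume : Measure (EuclideanSpace ℝ (Fin d))),
      densityMatrix d μSp μSn x i j =
        (S.transpose * densityMatrix d μp μn (L x) * S) i j := by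
    intro i j
    let p : Option (Fin d × Fin d) → Measure (EuclideanSpace ℝ (Fin d)) :=
      fun o => o.elim ((μSp i j).map L) fun q => μp q.1 q.2
    let n : Option (Fin d × Fin d) → Measure (EuclideanSpace ℝ (Fin d)) :=
      fun o => o.elim ((μSn i j).map L) fun q => μn q.1 q.2
    let c : Option (Fin d × Fin d) → ℝ := fun o => o.elim (-1) fun q => r * (S q.1 i * S q.2 j)
    have hpf : ∀ o, IsLocallyFiniteMeasure (p o) := by
      rintro (_ | q)
      exacts [hmap _ (hSp i j), hp q.1 q.2]
    have hnf : ∀ o, IsLocallyFiniteMeasure (n o) := by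
      rintro (_ | q)
      exacts [hmap _ (hSn i j), hn q.1 q.2]
    have hvolf := hmap volume inferInstance
    have key := ae_sum_mul_rnDeriv_sub_eq_zero
      ((volume : Measure (EuclideanSpace ℝ (Fin d))).map L) p n c fun φ hφ hφc => by
        simp only [p, n, c, Fintype.sum_option, Option.elim, hrel i j φ hφ hφc]
        ring
    have hscale : ∀ m : Measure (EuclideanSpace ℝ (Fin d)), IsLocallyFiniteMeasure m →
        ∀ᵐ x ∂(volume : Measure (EuclideanSpace ℝ (Fin d))),
          r * (m.rnDeriv (volume.map L) (L x)).toReal = (m.rnDeriv volume (L x)).toReal := by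
      intro m _
      have hac : (volume : Measure (EuclideanSpace ℝ (Fin d))).map L ≪ volume := by
        rw [hvol]
        exact Measure.smul_absolutelyContinuous
      refine ae_of_ae_map he.measurable.aemeasurable
        (p := fun y => r * (m.rnDeriv (volume.map L) y).toReal = (m.rnDeriv volume y).toReal)
        (hac.ae_le ?_)
      rw [hvol]
      filter_upwards [Measure.rnDeriv_smul_right' m volume hr] with y hy
      rw [hy, Pi.smul_apply, ENNReal.smul_def, smul_eq_mul, ENNReal.toReal_mul,
        ENNReal.coe_toReal, NNReal.coe_inv, mul_inv_cancel_left₀ (NNReal.coe_ne_zero.2 hr)]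
    filter_upwards [ae_of_ae_map he.measurable.aemeasurable key,
      he.rnDeriv_map (μSp i j) volume, he.rnDeriv_map (μSn i j) volume,
      ae_all_iff.2 fun q : Fin d × Fin d => hscale _ (hp q.1 q.2),
      ae_all_iff.2 fun q : Fin d × Fin d => hscale _ (hn q.1 q.2)] with x hx hxp hxn hqp hqn
    simp only [p, n, c, Fintype.sum_option, Option.elim, hxp, hxn] at hx
    have hsum : densityMatrix d μSp μSn x i j = ∑ q : Fin d × Fin d,
        S q.1 i * S q.2 j * densityMatrix d μp μn (L x) q.1 q.2 := by
      simp only [densityMatrix, Matrix.of_apply, ← hqp, ← hqn]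
      rw [← sub_eq_zero, ← neg_eq_zero, ← hx, neg_sub, sub_eq_neg_add, neg_one_mul]
      congr 1
      exact Finset.sum_congr rfl fun q _ => by ring
    rw [hsum, Fintype.sum_prod_type, Finset.sum_comm]
    simp only [Matrix.mul_apply, Matrix.transpose_apply, Finset.sum_mul]
    exact Finset.sum_congr rfl fun l _ => Finset.sum_congr rfl fun k _ => by ring
  filter_upwards [ae_all_iff.2 fun i => ae_all_iff.2 (hentry i)] with x hx
  exact Matrix.ext hx
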